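/- arXiv:2511.09701 — 3 statements merged into one kernel-verified Lean document; each statement's English description precedes it below -/
import Mathlib

section
/- Let T > 0 and t ∈ [0,T]. Define k : ℝ → ℝ by k(s) := cosh(min(s,t)) · cosh(T − max(s,t)) / sinh(T), and define g : ℝ → ℝ by g(s) := sinh(s) · cosh(T − t) / sinh(T) for s ≤ t and g(s) := − cosh(t) · sinh(T − s) / sinh(T) for s > t. Then k is continuous on [0,T], k(d) − k(c) = ∫_c^d g(r) dr for all 0 ≤ c ≤ d ≤ T, and for every continuously differentiable φ : ℝ → ℝ one has ∫_0^T k(s) φ(s) ds + ∫_0^T g(s) φ'(s) ds = φ(t). -/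
open MeasureTheory Set Real

theorem stmt_7 (T t : ℝ) (hT : 0 < T) (ht : t ∈ Set.Icc (0 : ℝ) T)
    (k g : ℝ → ℝ)
    (hk : k = fun s => Real.cosh (min s t) * Real.cosh (T - max s t) / Real.sinh T)
    (hg : g = fun s => if s ≤ t then Real.sinh s * Real.cosh (T - t) / Real.sinh T
      else -(Real.cosh t * Real.sinh (T - s)) / Real.sinh T) :
    ContinuousOn k (Set.Icc 0 T) ∧
    (∀ c d : ℝ, 0 ≤ c → c ≤ d → d ≤ T → k d - k c = ∫ r in c..d, g r) ∧
    ∀ φ : ℝ → ℝ, ContDiff ℝ 1 φ →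
      (∫ s in (0:ℝ)..T, k s * φ s) + (∫ s in (0:ℝ)..T, g s * deriv φ s) = φ t := by
  have hS : Real.sinh T ≠ 0 := (Real.sinh_pos_iff.2 hT).ne'
  have hkc : Continuous k := by
    rw [hk]
    exact ((Real.continuous_cosh.comp (continuous_id.min continuous_const)).mul
      (Real.continuous_cosh.comp (continuous_const.sub
        (continuous_id.max continuous_const)))).div_const _
  have hLc : Continuous fun s => Real.sinh s * Real.cosh (T - t) / Real.sinh T :=
    (Real.continuous_sinh.mul continuous_const).div_const _
  have hRc : Continuous fun s => -(Real.cosh t * Real.sinh (T - s)) / Real.sinh T :=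
    ((continuous_const.mul (Real.continuous_sinh.comp
      (continuous_const.sub continuous_id))).neg).div_const _
  have hkL : ∀ s ≤ t, k s = Real.cosh s * Real.cosh (T - t) / Real.sinh T := by
    intro s hs; simp [hk, hs]
  have hkR : ∀ s, t ≤ s → k s = Real.cosh t * Real.cosh (T - s) / Real.sinh T := by
    intro s hs; simp [hk, hs]
  have hgL : ∀ s ≤ t, g s = Real.sinh s * Real.cosh (T - t) / Real.sinh T := by
    intro s hs; simp [hg, hs]
  have hgR : ∀ s, t < s → g s = -(Real.cosh t * Real.sinh (T - s)) / Real.sinh T := by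
    intro s hs; simp [hg, not_le.2 hs]
  have dkL : ∀ s, HasDerivAt (fun s => Real.cosh s * Real.cosh (T - t) / Real.sinh T)
      (Real.sinh s * Real.cosh (T - t) / Real.sinh T) s := fun s =>
    ((Real.hasDerivAt_cosh s).mul_const _).div_const _
  have dkR : ∀ s, HasDerivAt (fun s => Real.cosh t * Real.cosh (T - s) / Real.sinh T)
      (-(Real.cosh t * Real.sinh (T - s)) / Real.sinh T) s := fun s => by
    have := ((((hasDerivAt_id s).const_sub T).cosh).const_mul (Real.cosh t)).div_const
      (Real.sinh T)
    refine this.congr_deriv ?_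
    simp
  have dgL : ∀ s, HasDerivAt (fun s => Real.sinh s * Real.cosh (T - t) / Real.sinh T)
      (Real.cosh s * Real.cosh (T - t) / Real.sinh T) s := fun s =>
    ((Real.hasDerivAt_sinh s).mul_const _).div_const _
  have dgR : ∀ s, HasDerivAt (fun s => -(Real.cosh t * Real.sinh (T - s)) / Real.sinh T)
      (Real.cosh t * Real.cosh (T - s) / Real.sinh T) s := fun s => by
    have := (((((hasDerivAt_id s).const_sub T).sinh).const_mul (Real.cosh t)).neg).div_const
      (Real.sinh T)
    refine this.congr_deriv ?_
    simp
  have hgi : ∀ a b, IntervalIntegrable g volume a b := by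
    have key : ∀ a b, IntegrableOn g (Ioc a b) volume := by
      intro a b
      have h1 := (hLc.intervalIntegrable (μ := volume) a b).1
      have h2 := (hRc.intervalIntegrable (μ := volume) a b).1
      have := Integrable.piecewise (s := Iic t) measurableSet_Iic
        (h1.integrable.integrableOn) (h2.integrable.integrableOn)
      rw [hg]
      exact this
    exact fun a b => ⟨key a b, key b a⟩
  refine ⟨hkc.continuousOn, ?_, ?_⟩
  · intro c d _ hcd _
    symm
    apply MeasureTheory.integral_eq_of_hasDerivAt_off_countable k g
      (Set.countable_singleton t) hkc.continuousOn _ (hgi c d)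
    rintro x ⟨-, hx⟩
    rcases lt_or_gt_of_ne (show x ≠ t from hx) with h | h
    · rw [hgL x h.le]
      refine (dkL x).congr_of_eventuallyEq ?_
      filter_upwards [Iio_mem_nhds h] with s hs using hkL s (le_of_lt hs)
    · rw [hgR x h]
      refine (dkR x).congr_of_eventuallyEq ?_
      filter_upwards [Ioi_mem_nhds h] with s hs using hkR s (le_of_lt hs)
  · intro φ hφ
    have hφc := hφ.continuous
    have hφ' : Continuous (deriv φ) := hφ.continuous_deriv le_rfl
    have dφ : ∀ s, HasDerivAt φ (deriv φ s) s := fun s =>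
      (hφ.differentiable one_ne_zero s).hasDerivAt
    have i1 : ∀ a b, IntervalIntegrable (fun s => k s * φ s) volume a b :=
      fun a b => (hkc.mul hφc).intervalIntegrable a b
    have i2 : ∀ a b, IntervalIntegrable (fun s => g s * deriv φ s) volume a b :=
      fun a b => (hgi a b).mul_continuousOn hφ'.continuousOn
    rw [← intervalIntegral.integral_add (i1 _ _) (i2 _ _),
      ← intervalIntegral.integral_add_adjacent_intervals
        ((i1 0 t).add (i2 0 t)) ((i1 t T).add (i2 t T))]
    have e1 : ∫ s in (0:ℝ)..t, (k s * φ s + g s * deriv φ s)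
        = Real.sinh t * Real.cosh (T - t) / Real.sinh T * φ t := by
      have := intervalIntegral.integral_eq_sub_of_hasDerivAt (a := 0) (b := t)
        (fun x _ => (dgL x).mul (dφ x)) (by
          apply Continuous.intervalIntegrable
          fun_prop)
      rw [intervalIntegral.integral_congr_ae (Filter.Eventually.of_forall fun s hs => ?_)]
      · refine this.trans ?_
        simp
      · rw [uIoc_of_le ht.1] at hs
        rw [hkL s hs.2, hgL s hs.2]
    have e2 : ∫ s in t..T, (k s * φ s + g s * deriv φ s)
        = Real.cosh t * Real.sinh (T - t) / Real.sinh T * φ t := by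
      have := intervalIntegral.integral_eq_sub_of_hasDerivAt (a := t) (b := T)
        (fun x _ => (dgR x).mul (dφ x)) (by
          apply Continuous.intervalIntegrable
          fun_prop)
      rw [intervalIntegral.integral_congr_ae (Filter.Eventually.of_forall fun s hs => ?_)]
      · refine this.trans ?_
        simp
        ring
      · rw [uIoc_of_le ht.2] at hs
        rw [hkR s hs.1.le, hgR s hs.1]
    rw [e1, e2]
    have h := Real.sinh_add t (T - t)
    rw [add_sub_cancel] at h
    rw [← add_mul, ← add_div, ← h, div_self hS, one_mul]
end

section
/- Let T > 0, t ∈ (0,T], and γ > 0. Define k_t : [0,T] → ℝ by k_t(s) := cosh(min(s,t)) · cosh(T − max(s,t)) / sinh(T), and k_0 : [0,T] → ℝ by k_0(s) := cosh(T − s) / sinh(T). Then there is no real number z such that (1 − z) · k_t(s) = γ · z · k_0(s) for all s ∈ [0,T]. -/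
open MeasureTheory Set Real

theorem stmt_9 (T t γ : ℝ) (hT : 0 < T) (ht : t ∈ Set.Ioc (0 : ℝ) T) (hγ : 0 < γ)
    (kt k0 : ℝ → ℝ)
    (hkt : kt = fun s => Real.cosh (min s t) * Real.cosh (T - max s t) / Real.sinh T)
    (hk0 : k0 = fun s => Real.cosh (T - s) / Real.sinh T) :
    ¬ ∃ z : ℝ, ∀ s ∈ Set.Icc (0 : ℝ) T, (1 - z) * kt s = γ * z * k0 s := by
  rintro ⟨z, hz⟩
  obtain ⟨ht0, htT⟩ := ht
  subst hkt hk0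
  have hS : 0 < Real.sinh T := Real.sinh_pos_iff.mpr hT
  have hs : 0 < Real.sinh t := Real.sinh_pos_iff.mpr ht0
  have hc : 0 < Real.cosh (T - t) := Real.cosh_pos _
  have hct : 0 < Real.cosh t := Real.cosh_pos _
  have h0 := hz 0 ⟨le_refl _, hT.le⟩
  have h1 := hz t ⟨ht0.le, htT⟩
  simp only [min_eq_left ht0.le, max_eq_right ht0.le, min_self, max_self, Real.cosh_zero,
    one_mul, sub_zero] at h0 h1
  rw [← mul_div_assoc, ← mul_div_assoc, div_left_inj' hS.ne'] at h0 h1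
  have hsub := Real.cosh_sub T t
  have h2 : γ * z * (Real.sinh T * Real.sinh t) = 0 := by
    linear_combination h1 - Real.cosh t * h0 + γ * z * hsub
  have hz0 : z = 0 := by
    have h3 : Real.sinh T * Real.sinh t ≠ 0 := (mul_pos hS hs).ne'
    rcases mul_eq_zero.mp h2 with h | h
    · exact (mul_eq_zero.mp h).resolve_left hγ.ne'
    · exact absurd h h3
  subst hz0
  simp at h0
  exact hc.ne' h0
end

section
/- Let T > 0 and L, M ≥ 0. Let b¹ : [0,T] × ℝ → ℝ be such that b¹ and its partial derivative ∂_s b¹ in the first variable exist, are continuous, and satisfy |b¹(s,c) − b¹(s,c')| ≤ L|c − c'| and |∂_s b¹(s,c) − ∂_s b¹(s,c')| ≤ L|c − c'| for all s ∈ [0,T] and c, c' ∈ ℝ. Let b² : [0,T] → ℝ be continuously differentiable with |b²(s)| ≤ M and |(b²)'(s)| ≤ M for all s ∈ [0,T]. Then there exists a constant C ≥ 0 such that for every continuously differentiable x : ℝ → ℝ and every t ∈ [0,T], the function g(s) := b¹(s, x(t)) + b²(s) x(s) satisfies ∫_0^T g(s)² ds + ∫_0^T g'(s)² ds ≤ C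 ( 1 + ∫_0^T x(s)² ds + ∫_0^T x'(s)² ds ). -/
open MeasureTheory Set Real

theorem sobolev_aux (T : ℝ) (hT : 0 < T) (x : ℝ → ℝ) (hx : ContDiff ℝ 1 x)
    (t : ℝ) (ht : t ∈ Set.Icc (0 : ℝ) T) :
    T * (x t) ^ 2 ≤ (1 + T) * ((∫ s in (0:ℝ)..T, (x s) ^ 2) + ∫ s in (0:ℝ)..T, (deriv x s) ^ 2) := by
  have hc : Continuous x := hx.continuous
  have hd : Continuous (deriv x) := hx.continuous_deriv le_rfl
  set A := ∫ s in (0:ℝ)..T, (x s) ^ 2 with hA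
  set D := ∫ s in (0:ℝ)..T, (deriv x s) ^ 2 with hD
  have hD0 : 0 ≤ D := intervalIntegral.integral_nonneg hT.le (fun s _ => sq_nonneg _)
  have hAD : (∫ u in (0:ℝ)..T, ((x u) ^ 2 + (deriv x u) ^ 2)) = A + D :=
    intervalIntegral.integral_add ((hc.pow 2).intervalIntegrable _ _)
      ((hd.pow 2).intervalIntegrable _ _)
  have key : ∀ s ∈ Set.Icc (0 : ℝ) T, (x t) ^ 2 ≤ (x s) ^ 2 + (A + D) := by
    intro s hs
    have hcf : Continuous (fun u => 2 * x u * deriv x u) := by fun_prop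
    have hcg : Continuous (fun u => (x u) ^ 2 + (deriv x u) ^ 2) := by fun_prop
    have h1 : (∫ u in s..t, 2 * x u * deriv x u) = (x t) ^ 2 - (x s) ^ 2 := by
      apply intervalIntegral.integral_eq_sub_of_hasDerivAt (f := fun u => (x u) ^ 2)
      · intro u _
        have := ((hx.differentiable one_ne_zero) u).hasDerivAt.fun_pow 2
        simpa using this
      · exact hcf.intervalIntegrable _ _
    have hsub : Set.uIoc s t ⊆ Set.Ioc 0 T := by
      intro u hu
      rw [Set.mem_uIoc] at hu
      rcases hu with hu | hu
      · exact ⟨lt_of_le_of_lt hs.1 hu.1, hu.2.trans ht.2⟩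
      · exact ⟨lt_of_le_of_lt ht.1 hu.1, hu.2.trans hs.2⟩
    have hint : IntegrableOn (fun u => (x u) ^ 2 + (deriv x u) ^ 2) (Set.Ioc 0 T) :=
      (hcg.integrableOn_Icc).mono_set Set.Ioc_subset_Icc_self
    have hintf : IntegrableOn (fun u => ‖2 * x u * deriv x u‖) (Set.Ioc 0 T) :=
      (hcf.norm.integrableOn_Icc).mono_set Set.Ioc_subset_Icc_self
    have h2 := intervalIntegral.norm_integral_le_integral_norm_uIoc
      (f := fun u => 2 * x u * deriv x u) (a := s) (b := t) (μ := volume)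
    have h3 : (∫ u in Set.uIoc s t, ‖2 * x u * deriv x u‖) ≤
        ∫ u in Set.uIoc s t, ((x u) ^ 2 + (deriv x u) ^ 2) := by
      apply integral_mono (hintf.mono_set hsub) (hint.mono_set hsub)
      intro u
      simp only [Real.norm_eq_abs]
      rw [abs_le]
      constructor <;> nlinarith [sq_nonneg (x u + deriv x u), sq_nonneg (x u - deriv x u)]
    have h4 : (∫ u in Set.uIoc s t, ((x u) ^ 2 + (deriv x u) ^ 2)) ≤
        ∫ u in Set.Ioc 0 T, ((x u) ^ 2 + (deriv x u) ^ 2) := by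
      apply setIntegral_mono_set hint
      · exact Filter.Eventually.of_forall (fun u => by simp only [Pi.zero_apply]; positivity)
      · exact Filter.Eventually.of_forall hsub
    rw [← intervalIntegral.integral_of_le hT.le, hAD] at h4
    rw [h1, Real.norm_eq_abs] at h2
    have := le_abs_self ((x t) ^ 2 - (x s) ^ 2)
    linarith
  have h5 : (∫ s in (0:ℝ)..T, (x t) ^ 2) ≤ ∫ s in (0:ℝ)..T, ((x s) ^ 2 + (A + D)) := by
    apply intervalIntegral.integral_mono_on hT.le (by simp) _ key
    exact Continuous.intervalIntegrable (by fun_prop) _ _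
  have i1 : IntervalIntegrable (fun s => (x s) ^ 2) volume 0 T :=
    Continuous.intervalIntegrable (by fun_prop) _ _
  rw [intervalIntegral.integral_add i1 (by simp)] at h5
  simp only [intervalIntegral.integral_const, smul_eq_mul, sub_zero] at h5
  nlinarith

theorem bound_aux (T a b d : ℝ) (hT : 0 < T) (x F : ℝ → ℝ) (hx : ContDiff ℝ 1 x)
    (hF : ContinuousOn F (Set.Icc 0 T))
    (h : ∀ s ∈ Set.Icc (0 : ℝ) T, F s ≤ a + b * (x s) ^ 2 + d * (deriv x s) ^ 2) :
    (∫ s in (0:ℝ)..T, F s) ≤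
      T * a + b * (∫ s in (0:ℝ)..T, (x s) ^ 2) + d * ∫ s in (0:ℝ)..T, (deriv x s) ^ 2 := by
  have hc : Continuous x := hx.continuous
  have hd : Continuous (deriv x) := hx.continuous_deriv le_rfl
  have i1 : IntervalIntegrable (fun s => b * (x s) ^ 2) volume 0 T :=
    Continuous.intervalIntegrable (by fun_prop) _ _
  have i2 : IntervalIntegrable (fun s => d * (deriv x s) ^ 2) volume 0 T :=
    Continuous.intervalIntegrable (by fun_prop) _ _
  have i0 : IntervalIntegrable (fun _ : ℝ => a) volume 0 T := by simp
  have h1 := intervalIntegral.integral_mono_on hT.le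
    (hF.intervalIntegrable_of_Icc hT.le) ((i0.add i1).add i2) h
  rw [intervalIntegral.integral_add (i0.add i1) i2, intervalIntegral.integral_add i0 i1] at h1
  simpa using h1

theorem stmt_10 (T L M : ℝ) (hT : 0 < T) (hL : 0 ≤ L) (hM : 0 ≤ M)
    (b₁ db₁ : ℝ → ℝ → ℝ)
    (hb₁deriv : ∀ c : ℝ, ∀ s ∈ Set.Icc (0 : ℝ) T,
      HasDerivWithinAt (fun r => b₁ r c) (db₁ s c) (Set.Icc 0 T) s)
    (hb₁cont : ContinuousOn (fun p : ℝ × ℝ => b₁ p.1 p.2) (Set.Icc 0 T ×ˢ Set.univ))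
    (hdb₁cont : ContinuousOn (fun p : ℝ × ℝ => db₁ p.1 p.2) (Set.Icc 0 T ×ˢ Set.univ))
    (hb₁lip : ∀ s ∈ Set.Icc (0 : ℝ) T, ∀ c c' : ℝ, |b₁ s c - b₁ s c'| ≤ L * |c - c'|)
    (hdb₁lip : ∀ s ∈ Set.Icc (0 : ℝ) T, ∀ c c' : ℝ, |db₁ s c - db₁ s c'| ≤ L * |c - c'|)
    (b₂ : ℝ → ℝ) (hb₂ : ContDiff ℝ 1 b₂)
    (hb₂bd : ∀ s ∈ Set.Icc (0 : ℝ) T, |b₂ s| ≤ M)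
    (hdb₂bd : ∀ s ∈ Set.Icc (0 : ℝ) T, |deriv b₂ s| ≤ M) :
    ∃ C : ℝ, 0 ≤ C ∧ ∀ x : ℝ → ℝ, ContDiff ℝ 1 x → ∀ t ∈ Set.Icc (0 : ℝ) T,
      (∫ s in (0:ℝ)..T, (b₁ s (x t) + b₂ s * x s) ^ 2) +
        (∫ s in (0:ℝ)..T, (db₁ s (x t) + deriv b₂ s * x s + b₂ s * deriv x s) ^ 2) ≤
      C * (1 + (∫ s in (0:ℝ)..T, (x s) ^ 2) + ∫ s in (0:ℝ)..T, (deriv x s) ^ 2) := by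
  have hz : ContinuousOn (fun s : ℝ => ((s, (0:ℝ)) : ℝ × ℝ)) (Set.Icc 0 T) := by fun_prop
  obtain ⟨K₁, hK₁⟩ := isCompact_Icc.exists_bound_of_continuousOn
    (hb₁cont.comp hz (fun s hs => ⟨hs, Set.mem_univ _⟩))
  obtain ⟨K₂, hK₂⟩ := isCompact_Icc.exists_bound_of_continuousOn
    (hdb₁cont.comp hz (fun s hs => ⟨hs, Set.mem_univ _⟩))
  simp only [Function.comp, Real.norm_eq_abs] at hK₁ hK₂
  have growth : ∀ p q c K : ℝ, |p| ≤ K → |q - p| ≤ L * |c - 0| →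
      q ^ 2 ≤ 2 * K ^ 2 + 2 * L ^ 2 * c ^ 2 := by
    intro p q c K h1 h2
    rw [sub_zero] at h2
    have e1 : p ^ 2 ≤ K ^ 2 := sq_le_sq' (abs_le.1 h1).1 (abs_le.1 h1).2
    have e2 : (q - p) ^ 2 ≤ (L * |c|) ^ 2 := sq_le_sq' (abs_le.1 h2).1 (abs_le.1 h2).2
    rw [mul_pow, sq_abs] at e2
    nlinarith [sq_nonneg (q - p - p)]
  have mulb : ∀ p y : ℝ, |p| ≤ M → (p * y) ^ 2 ≤ M ^ 2 * y ^ 2 := by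
    intro p y h
    rw [mul_pow]
    exact mul_le_mul_of_nonneg_right (sq_le_sq' (abs_le.1 h).1 (abs_le.1 h).2) (sq_nonneg _)
  refine ⟨T * (4 * K₁ ^ 2 + 6 * K₂ ^ 2) + 10 * L ^ 2 * (1 + T) + 5 * M ^ 2, by positivity, ?_⟩
  intro x hx t ht
  have hc : Continuous x := hx.continuous
  have hd : Continuous (deriv x) := hx.continuous_deriv le_rfl
  have hc2 : Continuous b₂ := hb₂.continuous
  have hd2 : Continuous (deriv b₂) := hb₂.continuous_deriv le_rfl
  have hS := sobolev_aux T hT x hx t ht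
  have hz' : ContinuousOn (fun s : ℝ => ((s, x t) : ℝ × ℝ)) (Set.Icc 0 T) := by fun_prop
  have c1 : ContinuousOn (fun s => b₁ s (x t)) (Set.Icc 0 T) :=
    hb₁cont.comp hz' (fun s hs => ⟨hs, Set.mem_univ _⟩)
  have c2 : ContinuousOn (fun s => db₁ s (x t)) (Set.Icc 0 T) :=
    hdb₁cont.comp hz' (fun s hs => ⟨hs, Set.mem_univ _⟩)
  have B1 := bound_aux T (4 * K₁ ^ 2 + 4 * L ^ 2 * (x t) ^ 2) (2 * M ^ 2) 0 hT x
    (fun s => (b₁ s (x t) + b₂ s * x s) ^ 2) hx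
    ((c1.add (hc2.mul hc).continuousOn).pow 2) (by
      intro s hs
      have g1 := growth _ _ _ _ (hK₁ s hs) (hb₁lip s hs (x t) 0)
      have g2 := mulb _ (x s) (hb₂bd s hs)
      nlinarith [sq_nonneg (b₁ s (x t) - b₂ s * x s)])
  have B2 := bound_aux T (6 * K₂ ^ 2 + 6 * L ^ 2 * (x t) ^ 2) (3 * M ^ 2) (3 * M ^ 2) hT x
    (fun s => (db₁ s (x t) + deriv b₂ s * x s + b₂ s * deriv x s) ^ 2) hx
    (((c2.add (hd2.mul hc).continuousOn).add (hc2.mul hd).continuousOn).pow 2) (by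
      intro s hs
      have g1 := growth _ _ _ _ (hK₂ s hs) (hdb₁lip s hs (x t) 0)
      have g2 := mulb _ (x s) (hdb₂bd s hs)
      have g3 := mulb _ (deriv x s) (hb₂bd s hs)
      nlinarith [sq_nonneg (db₁ s (x t) - deriv b₂ s * x s),
        sq_nonneg (db₁ s (x t) - b₂ s * deriv x s),
        sq_nonneg (deriv b₂ s * x s - b₂ s * deriv x s)])
  have hA0 : 0 ≤ ∫ s in (0:ℝ)..T, (x s) ^ 2 :=
    intervalIntegral.integral_nonneg hT.le (fun s _ => sq_nonneg _)
  have hD0 : 0 ≤ ∫ s in (0:ℝ)..T, (deriv x s) ^ 2 :=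
    intervalIntegral.integral_nonneg hT.le (fun s _ => sq_nonneg _)
  refine (add_le_add B1 B2).trans ?_
  generalize (∫ s in (0:ℝ)..T, (x s) ^ 2) = A at *
  generalize (∫ s in (0:ℝ)..T, (deriv x s) ^ 2) = D at *
  have e1 := mul_le_mul_of_nonneg_left hS (by positivity : 0 ≤ 10 * L ^ 2)
  have e2 : 0 ≤ T * (4 * K₁ ^ 2 + 6 * K₂ ^ 2) * (A + D) := by positivity
  have e3 : 0 ≤ 10 * L ^ 2 * (1 + T) := by positivity
  have e4 : 0 ≤ M ^ 2 * D := by positivity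
  have e5 : 0 ≤ M ^ 2 := by positivity
  linarith
end
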